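/- For real $\mu\ge 0$ and $z>0$ let $J_\mu(z)=\sum_{m=0}^\infty \frac{(-1)^m}{m!\,\Gamma(\mu+m+1)}\left(\frac z2\right)^{\mu+2m}$ be the Bessel function of the first kind of order $\mu$. Let $j_{\mu,1}$ denote the first positive zero of $J_\mu$. For $\mu>0$ let $j'_{\mu,1}$ denote the first positive zero of $J_\mu'$; for $\mu=0$ use the usual convention that the zero of $J_0'$ at the origin is counted first, i.e. $j'_{0,1}=0$. Let $\nu$ be a real number with $\nu\ge 1$. Then the function $z\mapsto J_{\nu-1}(z)-J_\nu(z)$ has exactly one zero in the open interval $(0,j_{\nu-1,1})$, namely its first positive zero $\lambda^-_{\nu-1,1}$, and this zero satisfies both $$j'_{\nu-1,1}<\lambda^-_{\nu-1,1}<j_{\nu-1,1}\qquad\text{and}\qquad \nu<\lambda^-_{\nu-1,1}<j'_{\nu,1}<j_{\nu,1}.$$ -/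

import Mathlib

/-- Bessel function of the first kind of real order `ν`, for `z > 0`, given by its power series
`J_ν(z) = ∑ₘ (−1)^m / (m! Γ(ν+m+1)) (z/2)^(ν+2m)` (real-exponent powers). -/
noncomputable def besselJ (ν z : ℝ) : ℝ :=
  ∑' m : ℕ, ((-1 : ℝ) ^ m / (Nat.factorial m * Real.Gamma (ν + m + 1))) *
    (z / 2) ^ (ν + 2 * (m : ℝ))

/-- The set of positive zeroes of `f`. -/
def posZeros (f : ℝ → ℝ) : Set ℝ := {z | 0 < z ∧ f z = 0}

/-- The zeroes of `J_μ′` that are counted by `j′_{μ,1}, j′_{μ,2}, …`: the positive zeroes and,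
for the order `μ = 0` only, also the zero of `J_0′` at the origin. This is the usual convention
`j′_{0,1} = 0`. -/
def derivZeros (μ : ℝ) : Set ℝ :=
  {z | z ∈ posZeros (deriv (besselJ μ)) ∨ (μ = 0 ∧ z = 0)}

/-- `x` is the `k`-th element (`k = 1, 2, …`) of `S` in increasing order: `x` lies in `S` and
exactly `k - 1` elements of `S` lie below it. -/
def IsKthElement (S : Set ℝ) (k : ℕ) (x : ℝ) : Prop :=
  x ∈ S ∧ (S ∩ Set.Iio x).encard + 1 = k

/-! Bessel's equation in the form `(z J_ν')' = (ν² - z²) J_ν / z` shows that neither `J_ν` nor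
`J_ν'` can vanish on `(0, ν]`. Hence `J_{ν-1} = J_ν' + (ν / z) J_ν > J_ν` there, and
`J_{ν-1} - J_ν` has no zero up to `ν`.

Beyond `ν`, the derivative of the quotient `J_ν / J_{ν-1}` has numerator
`A² + B² - ((2ν - 1) / z) A B` with `A = J_{ν-1}`, `B = J_ν`, which is positive because
`A² + B² ≥ 2 A B` and `2ν - 1 < 2z`. So the quotient increases strictly on `[ν, j_{ν-1,1})`, from a
value below `1` to `+∞`, and takes the value `1` exactly once, at `λ`. A zero `c` of `J_ν'` before
`j_{ν-1,1}` lies beyond `λ`, since the quotient there is `c / ν > 1`. On the other side,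
`J_{ν-1}'(λ) = ((ν - 1) / λ - 1) J_ν(λ) < 0` forces a zero of `J_{ν-1}'` before `λ`.
-/

open Set Filter
open scoped Nat

theorem hasDerivAt_tsum_mul_pow {𝕜 : Type*} [RCLike 𝕜] {a : ℕ → 𝕜}
    (ha : ∀ x, Summable fun n => a n * x ^ n) (x : 𝕜) :
    HasDerivAt (fun y => ∑' n, a n * y ^ n) (∑' n : ℕ, (n + 1) * a (n + 1) * x ^ n) x := by
  set p := FormalMultilinearSeries.ofScalars 𝕜 a with hp
  have hradius : p.radius = ⊤ := p.radius_eq_top_of_summable_norm fun r => by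
    simpa [hp] using (ha ((r : ℝ) : 𝕜)).norm
  have hx : ‖x‖ₑ < p.radius := by simp [hradius]
  have hsum : p.sum = fun y => ∑' n, a n * y ^ n := by
    ext y
    simp [hp, FormalMultilinearSeries.sum, mul_comm]
  have hderiv : p.derivSeries.sum x 1 = ∑' n : ℕ, (n + 1) * a (n + 1) * x ^ n := by
    have hsummable : Summable fun n => p.derivSeries n fun _ => x :=
      p.derivSeries.summable (by simpa using hx.trans_le p.radius_le_radius_derivSeries)
    rw [FormalMultilinearSeries.sum, ← ContinuousLinearMap.apply_apply (𝕜 := 𝕜) 1,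
      ContinuousLinearMap.map_tsum _ hsummable]
    refine tsum_congr fun n => ?_
    rw [ContinuousLinearMap.apply_apply, FormalMultilinearSeries.apply_eq_pow_smul_coeff,
      _root_.smul_apply, p.derivSeries_coeff_one]
    simp [hp, mul_comm]
  simpa only [hsum, hderiv] using (p.hasFDerivAt_sum hx).hasDerivAt

/-- The `m`-th Taylor coefficient of the Bessel–Clifford function of order `ν`. It vanishes, as
it should, when `ν + m + 1` is a pole of `Γ`, because there `Real.Gamma` takes the value `0`. -/
noncomputable def besselCliffordCoeff (ν : ℝ) (m : ℕ) : ℝ := (m ! * Real.Gamma (ν + m + 1))⁻¹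

/-- The Bessel–Clifford function `C_ν`, the entire function for which
`J_ν(z) = (z/2)^ν C_ν(-(z/2)^2)`. -/
noncomputable def besselClifford (ν x : ℝ) : ℝ := ∑' m, besselCliffordCoeff ν m * x ^ m

section BesselClifford

variable (ν : ℝ)

theorem add_one_mul_besselCliffordCoeff_add_one (m : ℕ) :
    (m + 1) * besselCliffordCoeff ν (m + 1) = besselCliffordCoeff (ν + 1) m := by
  have hm : (m : ℝ) + 1 ≠ 0 := by positivity
  rw [besselCliffordCoeff, besselCliffordCoeff, Nat.factorial_succ]
  push_cast
  rw [mul_assoc, mul_inv, mul_inv_cancel_left₀ hm]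
  ring_nf

theorem besselCliffordCoeff_sub_one (m : ℕ) :
    besselCliffordCoeff (ν - 1) m = (ν + m) * besselCliffordCoeff ν m := by
  rw [besselCliffordCoeff, besselCliffordCoeff, sub_add_eq_add_sub, sub_add_cancel]
  rcases eq_or_ne (ν + m) 0 with h | h
  · simp [h]
  · rw [Real.Gamma_add_one h]
    field_simp

theorem summable_besselCliffordCoeff_mul_pow (x : ℝ) :
    Summable fun m => besselCliffordCoeff ν m * x ^ m := by
  refine summable_of_ratio_norm_eventually_le (r := 1 / 2) (by norm_num) ?_
  filter_upwards [eventually_ge_atTop ⌈-ν⌉₊, eventually_ge_atTop ⌈2 * |x|⌉₊] with m hν hx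
  have hν : 0 ≤ ν + m := by linarith [Nat.ceil_le.mp hν]
  have hx : 2 * |x| ≤ m := Nat.ceil_le.mp hx
  have hcoeff : besselCliffordCoeff ν m =
      (m + 1) * (ν + m + 1) * besselCliffordCoeff ν (m + 1) := by
    have := besselCliffordCoeff_sub_one (ν + 1) m
    rw [add_sub_cancel_right, ← add_one_mul_besselCliffordCoeff_add_one] at this
    rw [this]
    ring
  have hm : 2 * |x| ≤ (m + 1) * (ν + m + 1) := by nlinarith
  calc ‖besselCliffordCoeff ν (m + 1) * x ^ (m + 1)‖
      = 1 / 2 * (2 * |x| * |besselCliffordCoeff ν (m + 1)| * |x| ^ m) := by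
        rw [norm_mul, norm_pow, Real.norm_eq_abs, Real.norm_eq_abs]
        ring
    _ ≤ 1 / 2 * ((m + 1) * (ν + m + 1) * |besselCliffordCoeff ν (m + 1)| * |x| ^ m) := by gcongr
    _ = 1 / 2 * ‖besselCliffordCoeff ν m * x ^ m‖ := by
        rw [hcoeff, norm_mul, norm_mul, norm_pow, Real.norm_of_nonneg (by positivity),
          Real.norm_eq_abs, Real.norm_eq_abs]

theorem hasDerivAt_besselClifford (x : ℝ) :
    HasDerivAt (besselClifford ν) (besselClifford (ν + 1) x) x := by
  have h := hasDerivAt_tsum_mul_pow (summable_besselCliffordCoeff_mul_pow ν) x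
  simp only [add_one_mul_besselCliffordCoeff_add_one] at h
  exact h

theorem continuous_besselClifford : Continuous (besselClifford ν) :=
  continuous_iff_continuousAt.mpr fun x => (hasDerivAt_besselClifford ν x).continuousAt

theorem besselClifford_sub_one (x : ℝ) :
    besselClifford (ν - 1) x = ν * besselClifford ν x + x * besselClifford (ν + 1) x := by
  have hsum (μ : ℝ) : HasSum (fun m => besselCliffordCoeff μ m * x ^ m) (besselClifford μ x) :=
    (summable_besselCliffordCoeff_mul_pow μ x).hasSum
  have hshift : HasSum (fun m : ℕ => m * (besselCliffordCoeff ν m * x ^ m))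
      (x * besselClifford (ν + 1) x) := by
    refine (hasSum_nat_add_iff' 1).mp ?_
    convert! (hsum (ν + 1)).mul_left x using 1
    · ext m
      rw [← add_one_mul_besselCliffordCoeff_add_one]
      push_cast
      ring
    · simp
  refine (hsum (ν - 1)).unique ?_
  convert! ((hsum ν).mul_left ν).add hshift using 2 with m
  rw [besselCliffordCoeff_sub_one]
  ring

variable {ν}

theorem besselClifford_zero_pos (hν : -1 < ν) : 0 < besselClifford ν 0 := by
  have hΓ : 0 < Real.Gamma (ν + 1) := Real.Gamma_pos_of_pos (by linarith)
  have : besselClifford ν 0 = (Real.Gamma (ν + 1))⁻¹ := by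
    rw [besselClifford, tsum_eq_single 0 fun m hm => by simp [hm]]
    simp [besselCliffordCoeff]
  rw [this]
  positivity

end BesselClifford

section BesselJ

variable {ν z j : ℝ}

theorem besselJ_eq_rpow_mul_besselClifford (hz : 0 ≤ z) (h : z ≠ 0 ∨ 0 ≤ ν) :
    besselJ ν z = (z / 2) ^ ν * besselClifford ν (-(z / 2) ^ 2) := by
  have hpow (m : ℕ) : (z / 2) ^ (ν + 2 * (m : ℝ)) = (z / 2) ^ ν * ((z / 2) ^ 2) ^ m := by
    have hsplit : (z / 2) ^ (ν + 2 * (m : ℝ)) = (z / 2) ^ ν * (z / 2) ^ (2 * (m : ℝ)) := by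
      rcases h with h | h
      · exact Real.rpow_add (by positivity) _ _
      · exact Real.rpow_add_of_nonneg (by positivity) h (by positivity)
    rw [hsplit, ← pow_mul, ← Real.rpow_natCast]
    push_cast
    rfl
  rw [besselJ, besselClifford, ← tsum_mul_left]
  refine tsum_congr fun m => ?_
  rw [hpow, besselCliffordCoeff, neg_pow ((z / 2) ^ 2)]
  ring

theorem besselJ_zero_right (hν : 0 < ν) : besselJ ν 0 = 0 := by
  rw [besselJ_eq_rpow_mul_besselClifford le_rfl (Or.inr hν.le), zero_div,
    Real.zero_rpow hν.ne', zero_mul]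

theorem continuousOn_besselJ (hν : 0 ≤ ν) : ContinuousOn (besselJ ν) (Ici 0) := by
  have : Continuous fun z : ℝ => (z / 2) ^ ν * besselClifford ν (-(z / 2) ^ 2) :=
    ((continuous_id.div_const 2).rpow_const fun _ => Or.inr hν).mul
      ((continuous_besselClifford ν).comp (by fun_prop))
  exact this.continuousOn.congr fun z hz => besselJ_eq_rpow_mul_besselClifford hz (Or.inr hν)

theorem hasDerivAt_besselJ (hz : 0 < z) :
    HasDerivAt (besselJ ν) (ν / z * besselJ ν z - besselJ (ν + 1) z) z := by
  have hz2 : z / 2 ≠ 0 := by positivity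
  have hhalf : HasDerivAt (fun y : ℝ => y / 2) (1 / 2) z := (hasDerivAt_id z).div_const 2
  have hprod := (hhalf.rpow_const (p := ν) (Or.inl hz2)).mul
    ((hasDerivAt_besselClifford ν (-(z / 2) ^ 2)).comp z (hhalf.pow 2).neg)
  refine (hprod.congr_deriv ?_).congr_of_eventuallyEq ?_
  · rw [besselJ_eq_rpow_mul_besselClifford hz.le (Or.inl hz.ne'),
      besselJ_eq_rpow_mul_besselClifford hz.le (Or.inl hz.ne'), Real.rpow_add_one hz2,
      Real.rpow_sub_one hz2]
    simp only [Function.comp_apply, Pi.pow_apply, Pi.neg_apply]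
    field_simp
    ring
  · filter_upwards [lt_mem_nhds hz] with y hy using
      besselJ_eq_rpow_mul_besselClifford hy.le (Or.inl hy.ne')

theorem besselJ_sub_one_add_besselJ_add_one (hz : 0 < z) :
    besselJ (ν - 1) z + besselJ (ν + 1) z = 2 * ν / z * besselJ ν z := by
  have hz2 : z / 2 ≠ 0 := by positivity
  simp only [besselJ_eq_rpow_mul_besselClifford hz.le (Or.inl hz.ne'), besselClifford_sub_one ν,
    Real.rpow_add_one hz2, Real.rpow_sub_one hz2]
  field_simp
  ring

theorem hasDerivAt_besselJ' (hz : 0 < z) :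
    HasDerivAt (besselJ ν) (besselJ (ν - 1) z - ν / z * besselJ ν z) z := by
  refine (hasDerivAt_besselJ hz).congr_deriv ?_
  linear_combination -besselJ_sub_one_add_besselJ_add_one (ν := ν) hz

theorem hasDerivAt_rpow_mul_besselJ (hz : 0 < z) :
    HasDerivAt (fun y => y ^ ν * besselJ ν y) (z ^ ν * besselJ (ν - 1) z) z := by
  refine ((Real.hasDerivAt_rpow_const (Or.inl hz.ne')).mul (hasDerivAt_besselJ' hz)).congr_deriv ?_
  rw [Real.rpow_sub_one hz.ne']
  field_simp
  ring

-- `ν J_ν(y) - y J_{ν+1}(y)` is `y J_ν'(y)`, so this is Bessel's equation in self-adjoint form.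
theorem hasDerivAt_mul_besselJ_sub_mul_besselJ_add_one (hz : 0 < z) :
    HasDerivAt (fun y => ν * besselJ ν y - y * besselJ (ν + 1) y)
      ((ν ^ 2 - z ^ 2) / z * besselJ ν z) z := by
  have hsucc := hasDerivAt_besselJ' (ν := ν + 1) hz
  rw [add_sub_cancel_right] at hsucc
  refine (((hasDerivAt_besselJ hz).const_mul ν).sub
    ((hasDerivAt_id z).mul hsucc)).congr_deriv ?_
  simp only [id]
  field_simp
  ring

theorem exists_isLeast_posZeros_besselJ (hν : -1 < ν) (hz : 0 < z) (hJ : besselJ ν z ≤ 0) :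
    ∃ x ≤ z, IsLeast (posZeros (besselJ ν)) x := by
  set g : ℝ → ℝ := fun y => besselClifford ν (-(y / 2) ^ 2) with hg
  have hcont : Continuous g := (continuous_besselClifford ν).comp (by fun_prop)
  have hJg {y : ℝ} (hy : 0 < y) : besselJ ν y = (y / 2) ^ ν * g y :=
    besselJ_eq_rpow_mul_besselClifford hy.le (Or.inl hy.ne')
  have hrpow {y : ℝ} (hy : 0 < y) : 0 < (y / 2) ^ ν := Real.rpow_pos_of_pos (by positivity) ν
  have hg0 : 0 < g 0 := by simpa [hg] using besselClifford_zero_pos hν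
  have hgz : g z ≤ 0 := nonpos_of_mul_nonpos_right (hJg hz ▸ hJ) (hrpow hz)
  obtain ⟨x, ⟨hx, hgx⟩, hmin⟩ := (isCompact_Icc.inter_right
    (isClosed_singleton.preimage hcont : IsClosed (g ⁻¹' {0}))).exists_isLeast
    (intermediate_value_Icc' hz.le hcont.continuousOn ⟨hgz, hg0.le⟩)
  have hx0 : 0 < x := hx.1.lt_of_ne fun h => hg0.ne' (h ▸ hgx)
  refine ⟨x, hx.2, ⟨hx0, by rw [hJg hx0, hgx, mul_zero]⟩, fun y hy => ?_⟩
  rcases le_total y z with hyz | hzy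
  · have hgy := (mul_eq_zero.mp ((hJg hy.1).symm.trans hy.2)).resolve_left (hrpow hy.1).ne'
    exact hmin ⟨⟨hy.1.le, hyz⟩, hgy⟩
  · exact hx.2.trans hzy

theorem besselJ_pos_of_lt_isLeast_posZeros (hν : -1 < ν) (hj : IsLeast (posZeros (besselJ ν)) j)
    (hz : 0 < z) (hzj : z < j) : 0 < besselJ ν z := by
  by_contra! hle
  obtain ⟨x, hxz, hx⟩ := exists_isLeast_posZeros_besselJ hν hz hle
  exact (hx.unique hj ▸ hxz).not_gt hzj

theorem deriv_besselJ_pos_of_forall_besselJ_pos (hz : 0 < z) (hzν : z ≤ ν)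
    (hpos : ∀ y ∈ Ioo 0 z, 0 < besselJ ν y) : 0 < deriv (besselJ ν) z := by
  have hν : 0 < ν := hz.trans_le hzν
  have hcont (μ : ℝ) (hμ : 0 ≤ μ) : ContinuousOn (besselJ μ) (Icc 0 z) :=
    (continuousOn_besselJ hμ).mono Icc_subset_Ici_self
  obtain ⟨y, hy, hslope⟩ := exists_hasDerivAt_eq_slope
    (fun y => ν * besselJ ν y - y * besselJ (ν + 1) y) _ hz
    (((hcont ν hν.le).const_mul ν).sub (continuousOn_id.mul (hcont (ν + 1) (by linarith))))
    fun y hy => hasDerivAt_mul_besselJ_sub_mul_besselJ_add_one hy.1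
  have hlhs : 0 < (ν ^ 2 - y ^ 2) / y * besselJ ν y := by
    have : 0 < ν ^ 2 - y ^ 2 := by nlinarith [hy.1, hy.2]
    have := hpos y hy
    have := hy.1
    positivity
  rw [hslope, besselJ_zero_right hν, mul_zero, zero_mul, sub_zero, sub_zero, sub_zero] at hlhs
  convert! hlhs using 1
  rw [(hasDerivAt_besselJ hz).deriv]
  field_simp

theorem exists_deriv_besselJ_eq_zero_of_besselJ_eq_zero (hν : 0 < ν) (hz : 0 < z)
    (hJ : besselJ ν z = 0) : ∃ x ∈ Ioo 0 z, deriv (besselJ ν) x = 0 :=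
  exists_deriv_eq_zero hz ((continuousOn_besselJ hν.le).mono Icc_subset_Ici_self)
    (by rw [besselJ_zero_right hν, hJ])

theorem besselJ_pos_of_le_order (hz : 0 < z) (hzν : z ≤ ν) : 0 < besselJ ν z := by
  have hν : 0 < ν := hz.trans_le hzν
  by_contra! hle
  obtain ⟨j, hjz, hj⟩ := exists_isLeast_posZeros_besselJ (by linarith) hz hle
  obtain ⟨x, hx, hx0⟩ := exists_deriv_besselJ_eq_zero_of_besselJ_eq_zero hν hj.1.1 hj.1.2
  refine (deriv_besselJ_pos_of_forall_besselJ_pos hx.1 (hx.2.le.trans (hjz.trans hzν))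
    fun y hy => ?_).ne' hx0
  exact besselJ_pos_of_lt_isLeast_posZeros (by linarith) hj hy.1 (hy.2.trans hx.2)

theorem deriv_besselJ_pos_of_le_order (hz : 0 < z) (hzν : z ≤ ν) : 0 < deriv (besselJ ν) z :=
  deriv_besselJ_pos_of_forall_besselJ_pos hz hzν fun _ hy =>
    besselJ_pos_of_le_order hy.1 (hy.2.le.trans hzν)

theorem exists_deriv_besselJ_eq_zero_of_deriv_neg (hν : 0 < ν) (hz : 0 < z)
    (hneg : deriv (besselJ ν) z < 0) : ∃ x ∈ Ioo 0 z, deriv (besselJ ν) x = 0 := by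
  have hνz : ν < z := by
    by_contra! hzν
    exact hneg.not_gt (deriv_besselJ_pos_of_le_order hz hzν)
  obtain ⟨x, hx, hx0⟩ := exists_hasDerivWithinAt_eq_of_lt_of_gt hνz.le
    (fun y hy => by
      have hd := (hasDerivAt_besselJ (ν := ν) (hν.trans_le hy.1)).differentiableAt
      exact hd.hasDerivAt.hasDerivWithinAt)
    (deriv_besselJ_pos_of_le_order hν le_rfl) hneg
  exact ⟨x, ⟨hν.trans hx.1, hx.2⟩, hx0⟩

theorem exists_besselJ_sub_one_eq_zero_of_besselJ_eq_zero (hν : 0 < ν) (hz : 0 < z)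
    (hJ : besselJ ν z = 0) : ∃ x ∈ Ioo 0 z, besselJ (ν - 1) x = 0 := by
  obtain ⟨x, hx, hx0⟩ := exists_hasDerivAt_eq_zero hz
    ((continuousOn_id.rpow_const fun _ _ => Or.inr hν.le).mul
      ((continuousOn_besselJ hν.le).mono Icc_subset_Ici_self))
    (by simp [Real.zero_rpow hν.ne', hJ]) fun x hx => hasDerivAt_rpow_mul_besselJ hx.1
  exact ⟨x, hx, (mul_eq_zero.mp hx0).resolve_left (Real.rpow_pos_of_pos hx.1 ν).ne'⟩

theorem besselJ_lt_besselJ_sub_one_of_le_order (hz : 0 < z) (hzν : z ≤ ν) :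
    besselJ ν z < besselJ (ν - 1) z := by
  have hderiv := deriv_besselJ_pos_of_le_order hz hzν
  rw [(hasDerivAt_besselJ' hz).deriv, sub_pos] at hderiv
  have hratio : 1 ≤ ν / z := (one_le_div hz).mpr hzν
  exact (le_mul_of_one_le_left (besselJ_pos_of_le_order hz hzν).le hratio).trans_lt hderiv

theorem lt_of_besselJ_sub_one_le_besselJ (hz : 0 < z) (h : besselJ (ν - 1) z ≤ besselJ ν z) :
    ν < z := by
  by_contra! hzν
  exact h.not_gt (besselJ_lt_besselJ_sub_one_of_le_order hz hzν)

end BesselJ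

section FirstZeroSubOne

variable {ν j : ℝ}

theorem besselJ_pos_of_le_isLeast_posZeros_sub_one {z : ℝ} (hν : 0 < ν)
    (hj : IsLeast (posZeros (besselJ (ν - 1))) j) (hz : 0 < z) (hzj : z ≤ j) :
    0 < besselJ ν z := by
  by_contra! hle
  obtain ⟨x, hxz, hx, -⟩ := exists_isLeast_posZeros_besselJ (by linarith) hz hle
  obtain ⟨y, hy, hy0⟩ := exists_besselJ_sub_one_eq_zero_of_besselJ_eq_zero hν hx.1 hx.2
  exact (hj.2 ⟨hy.1, hy0⟩).not_gt (hy.2.trans_le (hxz.trans hzj))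

theorem strictMonoOn_besselJ_div_besselJ_sub_one (hν : 0 < ν)
    (hj : IsLeast (posZeros (besselJ (ν - 1))) j) :
    StrictMonoOn (fun z => besselJ ν z / besselJ (ν - 1) z) (Ico ν j) := by
  have hA {z : ℝ} (hz : z ∈ Ico ν j) : 0 < besselJ (ν - 1) z :=
    besselJ_pos_of_lt_isLeast_posZeros (by linarith) hj (hν.trans_le hz.1) hz.2
  have hderiv {z : ℝ} (hz : z ∈ Ico ν j) :=
    (hasDerivAt_besselJ' (ν := ν) (hν.trans_le hz.1)).div
      (hasDerivAt_besselJ (ν := ν - 1) (hν.trans_le hz.1)) (hA hz).ne'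
  refine strictMonoOn_of_deriv_pos (convex_Ico ν j)
    (fun z hz => (hderiv hz).continuousAt.continuousWithinAt) fun z hz => ?_
  rw [interior_Ico] at hz
  have hz0 : 0 < z := hν.trans hz.1
  have hA := hA (Ioo_subset_Ico_self hz)
  have hB := besselJ_pos_of_le_isLeast_posZeros_sub_one hν hj hz0 hz.2.le
  refine (div_pos ?_ (pow_pos hA 2)).trans_eq (hderiv (Ioo_subset_Ico_self hz)).deriv.symm
  rw [sub_add_cancel]
  generalize besselJ (ν - 1) z = A at *
  generalize besselJ ν z = B at *
  have hcoeff : 0 < 2 - (2 * ν - 1) / z := by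
    rw [sub_pos, div_lt_iff₀ hz0]
    linarith [hz.1]
  calc 0 < (A - B) ^ 2 + (2 - (2 * ν - 1) / z) * (A * B) := by positivity
    _ = (A - ν / z * B) * A - B * ((ν - 1) / z * A - B) := by ring

theorem exists_besselJ_sub_one_eq_besselJ (hν : 0 < ν)
    (hj : IsLeast (posZeros (besselJ (ν - 1))) j) :
    ∃ z ∈ Ioo ν j, besselJ (ν - 1) z = besselJ ν z := by
  have hBj : 0 < besselJ ν j := besselJ_pos_of_le_isLeast_posZeros_sub_one hν hj hj.1.1 le_rfl
  have hjneg : besselJ (ν - 1) j < besselJ ν j := hj.1.2.trans_lt hBj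
  have hνj : ν < j := lt_of_besselJ_sub_one_le_besselJ hj.1.1 hjneg.le
  have hcont : ContinuousOn (fun z => besselJ (ν - 1) z - besselJ ν z) (Icc ν j) := fun z hz =>
    ((hasDerivAt_besselJ (hν.trans_le hz.1)).continuousAt.sub
      (hasDerivAt_besselJ (hν.trans_le hz.1)).continuousAt).continuousWithinAt
  obtain ⟨z, hz, hz0⟩ := intermediate_value_Ioo' hνj.le hcont
    ⟨sub_neg.mpr hjneg, sub_pos.mpr (besselJ_lt_besselJ_sub_one_of_le_order hν le_rfl)⟩
  exact ⟨z, hz, sub_eq_zero.mp hz0⟩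

theorem eq_of_besselJ_sub_one_eq_besselJ {x y : ℝ} (hν : 0 < ν)
    (hj : IsLeast (posZeros (besselJ (ν - 1))) j) (hx : x ∈ Ioo 0 j) (hy : y ∈ Ioo 0 j)
    (hxJ : besselJ (ν - 1) x = besselJ ν x) (hyJ : besselJ (ν - 1) y = besselJ ν y) : x = y := by
  have hpos {z : ℝ} (hz : z ∈ Ioo 0 j) : besselJ ν z ≠ 0 :=
    (besselJ_pos_of_le_isLeast_posZeros_sub_one hν hj hz.1 hz.2.le).ne'
  refine (strictMonoOn_besselJ_div_besselJ_sub_one hν hj).injOn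
    ⟨(lt_of_besselJ_sub_one_le_besselJ hx.1 hxJ.le).le, hx.2⟩
    ⟨(lt_of_besselJ_sub_one_le_besselJ hy.1 hyJ.le).le, hy.2⟩ ?_
  simp only [hxJ, hyJ, div_self (hpos hx), div_self (hpos hy)]

theorem lt_of_deriv_besselJ_eq_zero {x c : ℝ} (hν : 0 < ν)
    (hj : IsLeast (posZeros (besselJ (ν - 1))) j) (hx : x ∈ Ioo ν j)
    (hxJ : besselJ (ν - 1) x = besselJ ν x) (hc : 0 < c) (hcJ : deriv (besselJ ν) c = 0) :
    x < c := by
  have hνc : ν < c := by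
    by_contra! hcν
    exact (deriv_besselJ_pos_of_le_order hc hcν).ne' hcJ
  rcases le_or_gt j c with hjc | hcj
  · exact hx.2.trans_le hjc
  have hAc : 0 < besselJ (ν - 1) c :=
    besselJ_pos_of_lt_isLeast_posZeros (by linarith) hj hc hcj
  have hBc : 0 < besselJ ν c := besselJ_pos_of_le_isLeast_posZeros_sub_one hν hj hc hcj.le
  have hBx : 0 < besselJ ν x :=
    besselJ_pos_of_le_isLeast_posZeros_sub_one hν hj (hν.trans hx.1) hx.2.le
  have hAB : besselJ (ν - 1) c < besselJ ν c := by
    rw [(hasDerivAt_besselJ' hc).deriv, sub_eq_zero] at hcJ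
    rw [hcJ]
    exact mul_lt_of_lt_one_left hBc ((div_lt_one hc).mpr hνc)
  refine ((strictMonoOn_besselJ_div_besselJ_sub_one hν hj).lt_iff_lt ⟨hx.1.le, hx.2⟩
    ⟨hνc.le, hcj⟩).mp ?_
  simpa only [hxJ, div_self hBx.ne'] using (one_lt_div hAc).mpr hAB

end FirstZeroSubOne

theorem isLeast_derivZeros_lt {μ c z : ℝ} (hμ : 0 ≤ μ) (hc : IsLeast (derivZeros μ) c)
    (hz : 0 < z) (hneg : deriv (besselJ μ) z < 0) : c < z := by
  rcases hμ.eq_or_lt with rfl | hμ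
  · exact (hc.2 (Or.inr ⟨rfl, rfl⟩)).trans_lt hz
  · obtain ⟨x, hx, hx0⟩ := exists_deriv_besselJ_eq_zero_of_deriv_neg hμ hz hneg
    exact (hc.2 (Or.inl ⟨hx.1, hx0⟩)).trans_lt hx.2

theorem isKthElement_one_iff_isLeast {S : Set ℝ} {x : ℝ} : IsKthElement S 1 x ↔ IsLeast S x := by
  have hempty : (S ∩ Iio x).encard + 1 = ((1 : ℕ) : ℕ∞) ↔ S ∩ Iio x = ∅ := by
    rw [← encard_eq_zero]
    simp
  rw [IsKthElement, hempty, IsLeast]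
  simp [eq_empty_iff_forall_notMem, mem_lowerBounds]

/-- For `ν ≥ 1`, with `jm = j_{ν-1,1}`, `jn = j_{ν,1}`, `jm' = j′_{ν-1,1}`, `jn' = j′_{ν,1}`:
`J_{ν-1} - J_ν` has exactly one zero in `(0, j_{ν-1,1})`; this zero is `lam = λ⁻_{ν-1,1}`, and
`j′_{ν-1,1} < λ⁻_{ν-1,1} < j_{ν-1,1}` and `ν < λ⁻_{ν-1,1} < j′_{ν,1} < j_{ν,1}`. -/
theorem stmt4 (ν : ℝ) (hν : 1 ≤ ν) (jm jn jm' jn' : ℝ)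
    (hjm : IsKthElement (posZeros (besselJ (ν - 1))) 1 jm)
    (hjn : IsKthElement (posZeros (besselJ ν)) 1 jn)
    (hjm' : IsKthElement (derivZeros (ν - 1)) 1 jm')
    (hjn' : IsKthElement (derivZeros ν) 1 jn') :
    ∃ lam : ℝ,
      IsKthElement (posZeros (fun z => besselJ (ν - 1) z - besselJ ν z)) 1 lam ∧
      (∀ z ∈ Set.Ioo (0 : ℝ) jm, besselJ (ν - 1) z - besselJ ν z = 0 ↔ z = lam) ∧
      (jm' < lam ∧ lam < jm) ∧
      (ν < lam ∧ lam < jn' ∧ jn' < jn) := by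
  simp only [isKthElement_one_iff_isLeast] at *
  have hν0 : 0 < ν := by linarith
  obtain ⟨lam, hlam, heq⟩ := exists_besselJ_sub_one_eq_besselJ hν0 hjm
  have hlam0 : 0 < lam := hν0.trans hlam.1
  have huniq (z : ℝ) (hz : z ∈ Ioo 0 jm) : besselJ (ν - 1) z - besselJ ν z = 0 ↔ z = lam := by
    rw [sub_eq_zero]
    exact ⟨fun h => eq_of_besselJ_sub_one_eq_besselJ hν0 hjm hz ⟨hlam0, hlam.2⟩ h heq,
      fun h => h ▸ heq⟩
  refine ⟨lam, ⟨⟨hlam0, sub_eq_zero.mpr heq⟩, fun z hz => ?_⟩, huniq, ⟨?_, hlam.2⟩, hlam.1, ?_, ?_⟩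
  · by_contra! hlt
    exact hlt.ne ((huniq z ⟨hz.1, hlt.trans hlam.2⟩).mp hz.2)
  · refine isLeast_derivZeros_lt (sub_nonneg.mpr hν) hjm' hlam0 ?_
    rw [(hasDerivAt_besselJ hlam0).deriv, sub_add_cancel, ← heq, sub_neg]
    exact mul_lt_of_lt_one_left
      (besselJ_pos_of_lt_isLeast_posZeros (by linarith) hjm hlam0 hlam.2)
      ((div_lt_one hlam0).mpr (by linarith [hlam.1]))
  · obtain ⟨hpos, hzero⟩ := hjn'.1.resolve_right fun h => hν0.ne' h.1
    exact lt_of_deriv_besselJ_eq_zero hν0 hjm hlam heq hpos hzero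
  · obtain ⟨x, hx, hx0⟩ :=
      exists_deriv_besselJ_eq_zero_of_besselJ_eq_zero hν0 hjn.1.1 hjn.1.2
    exact (hjn'.2 (Or.inl ⟨hx.1, hx0⟩)).trans_lt hx.2
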